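/- arXiv:quant-ph/9707053 — 4 statements merged into one kernel-verified Lean document; each statement's English description precedes it below -/
import Mathlib

section
/- For every integer d ≥ 2 and every angle θ with 0 ≤ θ ≤ π/2, one has ∫₀^θ (sin φ)^{d−2} dφ ≤ (sin θ)^{d−1} · ∫₀^{π/2} (sin ψ)^{d−2} dψ. -/
open Real intervalIntegral

/-- The spherical-cap area inequality `A_d(r,θ) ≤ (1/2) S_d(r sin θ)`, stated for the
defining integrals: for `d ≥ 2` and `0 ≤ θ ≤ π/2`,
`∫₀^θ sin^{d-2} φ dφ ≤ (sin θ)^{d-1} ∫₀^{π/2} sin^{d-2} ψ dψ`. -/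
theorem cap_le_half_sphere (d : ℕ) (hd : 2 ≤ d) (θ : ℝ)
    (hθ0 : 0 ≤ θ) (hθ1 : θ ≤ π / 2) :
    (∫ φ in (0 : ℝ)..θ, Real.sin φ ^ (d - 2)) ≤
      Real.sin θ ^ (d - 1) * ∫ ψ in (0 : ℝ)..(π / 2), Real.sin ψ ^ (d - 2) := by
  obtain ⟨n, rfl⟩ := Nat.exists_eq_add_of_le' hd
  have e1 : n + 2 - 2 = n := by omega
  have e2 : n + 2 - 1 = n + 1 := by omega
  rw [e1, e2]
  rcases hθ1.eq_or_lt with h | hlt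
  · subst h
    simp
  have hpi := Real.pi_pos
  have hs0 : 0 ≤ Real.sin θ := Real.sin_nonneg_of_nonneg_of_le_pi hθ0 (by linarith)
  have hs1 : Real.sin θ < 1 := by
    rw [← Real.sin_pi_div_two]
    exact Real.sin_lt_sin_of_lt_of_le_pi_div_two (by linarith) le_rfl hlt
  have harc : Real.arcsin (Real.sin θ) = θ := Real.arcsin_sin (by linarith) hθ1
  set s := Real.sin θ with hs
  have hup : ∀ x : ℝ, s * Real.sin x < 1 := fun x => by
    nlinarith [Real.sin_le_one x, Real.neg_one_le_sin x]
  have hlo : ∀ x : ℝ, -1 < s * Real.sin x := fun x => by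
    nlinarith [Real.sin_le_one x, Real.neg_one_le_sin x]
  have hpos : ∀ x : ℝ, 0 < 1 - (s * Real.sin x) ^ 2 := fun x => by
    nlinarith [hup x, hlo x]
  have hne : ∀ x : ℝ, √(1 - (s * Real.sin x) ^ 2) ≠ 0 := fun x =>
    (Real.sqrt_pos.2 (hpos x)).ne'
  have hder : ∀ x : ℝ, HasDerivAt (fun x => Real.arcsin (s * Real.sin x))
      (1 / √(1 - (s * Real.sin x) ^ 2) * (s * Real.cos x)) x := fun x =>
    HasDerivAt.comp (h₂ := Real.arcsin) (h := fun x => s * Real.sin x) x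
      (Real.hasDerivAt_arcsin (hlo x).ne' (hup x).ne) ((Real.hasDerivAt_sin x).const_mul s)
  have hcont : Continuous fun x : ℝ => 1 / √(1 - (s * Real.sin x) ^ 2) * (s * Real.cos x) :=
    (continuous_const.div (by fun_prop) hne).mul (by fun_prop)
  have key := intervalIntegral.integral_comp_mul_deriv (a := 0) (b := π / 2)
    (f := fun x => Real.arcsin (s * Real.sin x)) (g := fun φ => Real.sin φ ^ n)
    (fun x _ => hder x) hcont.continuousOn (by fun_prop)
  simp only [Real.sin_zero, mul_zero, Real.arcsin_zero, Real.sin_pi_div_two, mul_one, harc] at key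
  rw [← key, ← intervalIntegral.integral_const_mul]
  have hsin : ∀ x : ℝ, Real.sin (Real.arcsin (s * Real.sin x)) = s * Real.sin x := fun x =>
    Real.sin_arcsin (hlo x).le (hup x).le
  simp only [Function.comp_def, hsin]
  apply intervalIntegral.integral_mono_on (by linarith)
  · exact Continuous.intervalIntegrable (Continuous.mul (by fun_prop) hcont) _ _
  · exact Continuous.intervalIntegrable (by fun_prop) _ _
  intro x hx
  have hsx : 0 ≤ Real.sin x := Real.sin_nonneg_of_nonneg_of_le_pi hx.1 (by linarith [hx.2])
  have hle : Real.cos x / √(1 - (s * Real.sin x) ^ 2) ≤ 1 := by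
    rw [div_le_one (Real.sqrt_pos.2 (hpos x))]
    apply Real.le_sqrt_of_sq_le
    rw [Real.cos_sq']
    have : (s * Real.sin x) ^ 2 ≤ Real.sin x ^ 2 := by
      apply pow_le_pow_left₀ (by positivity)
      nlinarith
    linarith
  calc (s * Real.sin x) ^ n * (1 / √(1 - (s * Real.sin x) ^ 2) * (s * Real.cos x))
      = (s ^ (n + 1) * Real.sin x ^ n) * (Real.cos x / √(1 - (s * Real.sin x) ^ 2)) := by ring
    _ ≤ (s ^ (n + 1) * Real.sin x ^ n) * 1 := mul_le_mul_of_nonneg_left hle (by positivity)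
    _ = _ := mul_one _
end

section
/- Let α ≥ 1 be real and let s satisfy −1 < s ≤ −(2α+3)/(2α+5). Let k ∈ ℕ and let f₀, f₁, …, f_k be reals with f₀ > 0 and f_i ≥ 0 for i = 1, …, k, and suppose the polynomial f(t) = Σ_{i=0}^k f_i · P_i^{(α,−1/2)}(t) satisfies f(t) ≤ 0 for all t ∈ [−1, s]. Then f(1)/f₀ ≥ 1 − 1/P̃₁^{(α,−1/2)}(s). -/
open Finset

/-- The generalized binomial coefficient `binom(a, k) = a(a-1)⋯(a-k+1)/k!` for real `a`. -/
noncomputable def genBinom (a : ℝ) (k : ℕ) : ℝ :=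
  (∏ i ∈ Finset.range k, (a - i)) / (Nat.factorial k)

/-- The Jacobi polynomial
`P_n^{(α,β)}(x) = Σ_{s=0}^n binom(n+α, n-s)·binom(n+β, s)·((x-1)/2)^s·((x+1)/2)^{n-s}`. -/
noncomputable def jacobiP (n : ℕ) (α β x : ℝ) : ℝ :=
  ∑ s ∈ Finset.range (n + 1),
    genBinom (n + α) (n - s) * genBinom (n + β) s * ((x - 1) / 2) ^ s * ((x + 1) / 2) ^ (n - s)

/-- The normalized Jacobi polynomial `P̃_n^{(α,β)}(x) = P_n^{(α,β)}(x) / P_n^{(α,β)}(1)`. -/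
noncomputable def jacobiPt (n : ℕ) (α β x : ℝ) : ℝ :=
  jacobiP n α β x / jacobiP n α β 1

open Polynomial in
/-- the Jacobi polynomial in the variable `z = (x+1)/2` -/
noncomputable def jacPoly (n : ℕ) (α β : ℝ) : Polynomial ℝ :=
  ∑ s ∈ Finset.range (n + 1),
    C (genBinom (n + α) (n - s) * genBinom (n + β) s) * ((X - 1) ^ s * X ^ (n - s))

lemma jacPoly_eval (n : ℕ) (α β x : ℝ) :
    (jacPoly n α β).eval ((x + 1) / 2) = jacobiP n α β x := by
  unfold jacPoly jacobiP
  rw [Polynomial.eval_finsetSum]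
  refine Finset.sum_congr rfl fun s _ => ?_
  simp only [Polynomial.eval_mul, Polynomial.eval_C, Polynomial.eval_pow, Polynomial.eval_sub,
    Polynomial.eval_X, Polynomial.eval_one]
  rw [show (x + 1) / 2 - 1 = (x - 1) / 2 by ring]
  ring

lemma genBinom_succ (a : ℝ) (k : ℕ) :
    genBinom a (k + 1) * (k + 1) = genBinom a k * (a - k) := by
  unfold genBinom
  rw [Finset.prod_range_succ, Nat.factorial_succ]
  have : (Nat.factorial k : ℝ) ≠ 0 := by positivity
  have : (k : ℝ) + 1 ≠ 0 := by positivity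
  push_cast
  field_simp

lemma genBinom_zero (a : ℝ) : genBinom a 0 = 1 := by simp [genBinom]

/-- The auxiliary telescoping term. -/
noncomputable def telV (n : ℕ) (α β z : ℝ) (s : ℕ) : ℝ :=
  genBinom (n + α) (n - s) * genBinom (n + β) s * (s + α) *
    (s * ((z - 1) ^ s * z ^ (n - s)) - z * (s * (z - 1) ^ (s - 1)) * z ^ (n - s))

lemma telV_succ (n : ℕ) (α β z : ℝ) (s : ℕ) (hs : s < n) :
    telV n α β z (s + 1) = genBinom (n + α) (n - s) * genBinom (n + β) s * ((n - s : ℕ) + β) *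
      ((z - 1) * (z - 1) ^ s * ((n - s : ℕ) * z ^ (n - s - 1))
        - (n - s : ℕ) * ((z - 1) ^ s * z ^ (n - s))) := by
  obtain ⟨m, rfl⟩ : ∃ m, n = s + 1 + m := ⟨n - (s + 1), by omega⟩
  unfold telV
  rw [show s + 1 + m - (s + 1) = m by omega, show s + 1 + m - s = m + 1 by omega]
  simp only [Nat.add_sub_cancel]
  have h1 := genBinom_succ ((s + 1 + m : ℕ) + α) m
  have h2 := genBinom_succ ((s + 1 + m : ℕ) + β) s
  push_cast at h1 h2 ⊢
  set A := genBinom ((s : ℝ) + 1 + m + α) m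
  set A' := genBinom ((s : ℝ) + 1 + m + α) (m + 1)
  set B := genBinom ((s : ℝ) + 1 + m + β) s
  set B' := genBinom ((s : ℝ) + 1 + m + β) (s + 1)
  have key : A * B' * (s + 1) * (s + 1 + α) = A' * B * (m + 1) * (m + 1 + β) := by
    linear_combination A * (s + 1 + α) * h2 - B * (m + 1 + β) * h1
  simp only [pow_succ]
  linear_combination ((z-1)^s * (z-1) * z^m - z * (z-1)^s * z^m) * key

open Polynomial in
lemma term_ode (α β z a : ℝ) (s m : ℕ) :
    z * (1 - z) * (derivative (derivative (C a * ((X - 1) ^ s * X ^ m)))).eval z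
      + ((β + 1) - (α + β + 2) * z) * (derivative (C a * ((X - 1) ^ s * X ^ m))).eval z
      + (s + m) * (s + m + α + β + 1) * (C a * ((X - 1) ^ s * X ^ m)).eval z
    = a * (s + α) * (s * ((z - 1) ^ s * z ^ m) - z * (s * (z - 1) ^ (s - 1)) * z ^ m)
      - a * (m + β) * ((z - 1) * (z - 1) ^ s * (m * z ^ (m - 1))
        - m * ((z - 1) ^ s * z ^ m)) := by
  have d1 : derivative ((X - 1 : ℝ[X]) ^ s) = C (s : ℝ) * (X - 1) ^ (s - 1) := by
    rw [derivative_pow]; simp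
  have d2 : derivative ((X - 1 : ℝ[X]) ^ (s - 1)) = C ((s - 1 : ℕ) : ℝ) * (X - 1) ^ (s - 1 - 1) := by
    rw [derivative_pow]; simp
  have d3 : derivative ((X : ℝ[X]) ^ m) = C (m : ℝ) * X ^ (m - 1) := by
    rw [derivative_X_pow]
  have d4 : derivative ((X : ℝ[X]) ^ (m - 1)) = C ((m - 1 : ℕ) : ℝ) * X ^ (m - 1 - 1) := by
    rw [derivative_X_pow]
  simp only [derivative_C_mul, derivative_mul, derivative_add, d1, d2, d3, d4, derivative_C,
    eval_add, eval_mul, eval_C, eval_pow, eval_sub, eval_X, eval_one, eval_zero, zero_mul, zero_add]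
  rcases s with _ | _ | s <;> rcases m with _ | _ | m <;>
    simp only [Nat.add_sub_cancel, Nat.zero_sub, zero_add, Nat.sub_self] <;> push_cast <;> ring

open Polynomial in
lemma jacPoly_ode (n : ℕ) (α β z : ℝ) :
    z * (1 - z) * (derivative (derivative (jacPoly n α β))).eval z
      + ((β + 1) - (α + β + 2) * z) * (derivative (jacPoly n α β)).eval z
      + n * (n + α + β + 1) * (jacPoly n α β).eval z = 0 := by
  unfold jacPoly
  simp only [derivative_sum, eval_finsetSum, Finset.mul_sum]
  rw [← Finset.sum_add_distrib, ← Finset.sum_add_distrib]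
  have h0 : telV n α β z 0 = 0 := by simp [telV]
  trans ∑ s ∈ Finset.range (n + 1), (telV n α β z s -
      (if s < n then telV n α β z (s + 1) else 0))
  · refine Finset.sum_congr rfl ?_
    intro s hs
    have hsn : s ≤ n := by simpa [Nat.lt_succ_iff] using hs
    have := term_ode α β z (genBinom (n + α) (n - s) * genBinom (n + β) s) s (n - s)
    rw [show (s : ℝ) + ((n - s : ℕ) : ℝ) = n by push_cast [hsn]; ring] at this
    rw [this]
    congr 1
    split_ifs with h
    · rw [telV_succ n α β z s h]
    · have : s = n := by omega
      subst this
      simp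
  rw [Finset.sum_sub_distrib, Finset.sum_range_succ']
  rw [Finset.sum_range_succ, h0, if_neg (lt_irrefl n)]
  rw [Finset.sum_congr rfl (g := fun s => telV n α β z (s + 1))
    (fun s hs => if_pos (Finset.mem_range.1 hs))]
  ring

/-- The energy estimate. -/
lemma energy (n : ℕ) (hn : 1 ≤ n) (α z : ℝ) (hα : 1 ≤ α) (hz : 0 ≤ z) (hz1 : z * (2 * α + 5) ≤ 1) :
    ((jacPoly n α (-1/2)).eval z) ^ 2 * (3 * (2 * α + 5) / (4 * (2 * α + 4))) ^ 4
      ≤ ((jacPoly n α (-1/2)).eval 0) ^ 2 := by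
  set p := jacPoly n α (-1/2) with hp
  set p' := Polynomial.derivative p with hp'
  set p'' := Polynomial.derivative p' with hp''
  set ν : ℝ := n * (n + α + (-1/2) + 1) with hν
  have hn' : (1 : ℝ) ≤ n := by exact_mod_cast hn
  have hνpos : 0 < ν := by rw [hν]; apply mul_pos <;> linarith
  set c : ℝ := (2 * α + 1) * (2 * α + 5) / (4 * (2 * α + 4)) with hc
  have hcpos : 0 < c := by rw [hc]; apply div_pos; apply mul_pos; all_goals linarith
  have hceq : c * (4 * (2 * α + 4)) = (2 * α + 1) * (2 * α + 5) := by
    rw [hc]; field_simp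
  have ode : ∀ x : ℝ, x * (1 - x) * p''.eval x + (1 / 2 - (α + 3 / 2) * x) * p'.eval x
      + ν * p.eval x = 0 := by
    intro x
    have := jacPoly_ode n α (-1/2) x
    rw [← hp, ← hp', ← hp''] at this
    linear_combination this
  let Φ : ℝ → ℝ := fun x => (1 - c * x) ^ 4 *
    (ν * (p.eval x) ^ 2 + x * (1 - x) * (p'.eval x) ^ 2)
  have hder : ∀ x, HasDerivAt Φ ((1 - c * x) ^ 3 * (-4 * c *
      (ν * (p.eval x) ^ 2 + x * (1 - x) * (p'.eval x) ^ 2)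
      + (1 - c * x) * ((2 * α + 1) * x * (p'.eval x) ^ 2))) x := by
    intro x
    have h1 : HasDerivAt (fun x => p.eval x) (p'.eval x) x := p.hasDerivAt x
    have h2 : HasDerivAt (fun x => p'.eval x) (p''.eval x) x := p'.hasDerivAt x
    have h3 : HasDerivAt (fun x : ℝ => x) 1 x := hasDerivAt_id' x
    have h := (((h3.const_mul c).const_sub 1).pow 4).mul
      (((h1.pow 2).const_mul ν).add ((h3.mul (h3.const_sub 1)).mul (h2.pow 2)))
    refine h.congr_deriv ?_
    simp
    linear_combination (1 - c * x) ^ 4 * 2 * p'.eval x * ode x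
  have hcz : ∀ x, x * (2 * α + 5) ≤ 1 → (3 * (2 * α + 5) / (4 * (2 * α + 4))) ≤ 1 - c * x := by
    intro x hx
    rw [div_le_iff₀ (by linarith)]
    have : c * x * (4 * (2 * α + 4)) = (2 * α + 1) * (x * (2 * α + 5)) := by
      linear_combination x * hceq
    nlinarith
  have hKpos : 0 < (3 * (2 * α + 5) / (4 * (2 * α + 4))) := by
    apply div_pos <;> linarith
  have hanti : AntitoneOn Φ (Set.Icc 0 z) := by
    apply antitoneOn_of_deriv_nonpos (convex_Icc 0 z)
    · exact fun x _ => (hder x).continuousAt.continuousWithinAt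
    · exact fun x _ => (hder x).differentiableAt.differentiableWithinAt
    · intro x hx
      rw [interior_Icc] at hx
      rw [(hder x).deriv]
      have hx0 := hx.1
      have hx1 : x * (2 * α + 5) ≤ 1 := by nlinarith [hx.2]
      have hk := hcz x hx1
      have hpos : 0 < 1 - c * x := by linarith
      have hcx : 0 < c * x := mul_pos hcpos hx0
      have hmain : (1 - c * x) * (2 * α + 1) ≤ 4 * c * (1 - x) := by
        have h1 : (2 * α + 1) ≤ 4 * c * (1 - x) := by
          have : 0 ≤ (4 * c * (1 - x) - (2 * α + 1)) * (2 * α + 4) := by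
            have e : (4 * c * (1 - x) - (2 * α + 1)) * (2 * α + 4)
              = (2 * α + 1) * (1 - x * (2 * α + 5)) := by
              linear_combination (1 - x) * hceq
            rw [e]; apply mul_nonneg <;> linarith
          have := nonneg_of_mul_nonneg_left this (by linarith)
          linarith
        nlinarith
      apply mul_nonpos_of_nonneg_of_nonpos (by positivity)
      have h1 : 0 ≤ (4 * c * (1 - x) - (1 - c * x) * (2 * α + 1)) * (x * (p'.eval x) ^ 2) :=
        mul_nonneg (by linarith) (by positivity)
      have h2 : 0 ≤ 4 * c * (ν * (p.eval x) ^ 2) := by positivity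
      nlinarith
  have hle := hanti (Set.left_mem_Icc.2 hz) (Set.right_mem_Icc.2 hz) hz
  simp only [Φ] at hle
  have hk := hcz z hz1
  have hz2 : z ≤ 1 := by nlinarith
  have hpow : (3 * (2 * α + 5) / (4 * (2 * α + 4))) ^ 4 ≤ (1 - c * z) ^ 4 :=
    pow_le_pow_left₀ hKpos.le hk 4
  have h5 : 0 ≤ (1 - c * z) ^ 4 * (z * (1 - z) * (p'.eval z) ^ 2) := by
    have : 0 ≤ 1 - z := by linarith
    positivity
  have h6 : ν * ((1 - c * z) ^ 4 * (p.eval z) ^ 2) ≤ ν * (p.eval 0) ^ 2 := by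
    nlinarith
  have h7 := le_of_mul_le_mul_left h6 hνpos
  have h8 := mul_le_mul_of_nonneg_left hpow (sq_nonneg (p.eval z))
  linarith

lemma jacPoly_eval_zero (n : ℕ) (α β : ℝ) :
    (jacPoly n α β).eval 0 = (-1) ^ n * genBinom (n + β) n := by
  unfold jacPoly
  rw [Polynomial.eval_finsetSum, Finset.sum_eq_single n]
  · simp [genBinom_zero]; ring
  · intro s hs hne
    have : n - s ≠ 0 := by have := Finset.mem_range.1 hs; omega
    simp [this]
  · simp

lemma jacobiP_one (n : ℕ) (α β : ℝ) : jacobiP n α β 1 = genBinom (n + α) n := by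
  unfold jacobiP
  rw [Finset.sum_eq_single 0]
  · simp [genBinom_zero]
  · intro s hs hne
    simp [hne]
  · simp

lemma genBinom_shift (a : ℝ) (n : ℕ) :
    genBinom ((n + 1 : ℕ) + a) (n + 1) * (n + 1) = genBinom (n + a) n * (n + 1 + a) := by
  unfold genBinom
  rw [Finset.prod_range_succ', Nat.factorial_succ]
  have : (Nat.factorial n : ℝ) ≠ 0 := by positivity
  have : (n : ℝ) + 1 ≠ 0 := by positivity
  have e : ∀ k ∈ Finset.range n, (((n + 1 : ℕ) : ℝ) + a - ((k + 1 : ℕ) : ℝ)) = n + a - k := by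
    intro k _; push_cast; ring
  rw [Finset.prod_congr rfl e]
  push_cast
  field_simp
  ring

lemma genBinom_pos (a : ℝ) (ha : -1 < a) (n : ℕ) : 0 < genBinom (n + a) n := by
  unfold genBinom
  apply div_pos _ (by positivity)
  apply Finset.prod_pos
  intro i hi
  have : (i : ℝ) + 1 ≤ n := by exact_mod_cast Finset.mem_range.1 hi
  linarith

lemma ratio_bound (α : ℝ) (hα : 1 ≤ α) (n : ℕ) (hn : 4 ≤ n) :
    genBinom (n + (-1/2)) n * ((2*α+2)*(2*α+4)*(2*α+6)*(2*α+8)) ≤ 105 * genBinom (n + α) n := by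
  induction n, hn using Nat.le_induction with
  | base =>
    apply le_of_eq
    simp [genBinom, Finset.prod_range_succ, Nat.factorial]
    ring
  | succ n hn ih =>
    have h1 := genBinom_shift (-1/2) n
    have h2 := genBinom_shift α n
    have hp : (0 : ℝ) < n + 1 := by positivity
    have h3 := genBinom_pos α (by linarith) n
    set A := genBinom (n + (-1/2)) n
    set B := genBinom (n + α) n
    refine le_of_mul_le_mul_right ?_ hp
    have e1 : genBinom ((n + 1 : ℕ) + (-1/2)) (n + 1) *
      ((2*α+2)*(2*α+4)*(2*α+6)*(2*α+8)) * ((n:ℝ) + 1) =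
      (A * ((2*α+2)*(2*α+4)*(2*α+6)*(2*α+8))) * (n + 1 + (-1/2)) := by
      linear_combination ((2*α+2)*(2*α+4)*(2*α+6)*(2*α+8)) * h1
    have e2 : 105 * genBinom ((n + 1 : ℕ) + α) (n + 1) * ((n:ℝ) + 1) =
      (105 * B) * (n + 1 + α) := by
      linear_combination 105 * h2
    rw [e1, e2]
    apply mul_le_mul ih (by linarith) (by linarith) (by linarith)

lemma jac1 (α z : ℝ) : (jacPoly 1 α (-1/2)).eval z = ((2*α+3)*z - 1)/2 := by
  simp [jacPoly, genBinom, Finset.sum_range_succ, Finset.prod_range_succ]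
  ring

lemma jac2 (α z : ℝ) : (jacPoly 2 α (-1/2)).eval z =
    ((2*α+5)*(2*α+7)*z^2 - 6*(2*α+5)*z + 3)/8 := by
  simp [jacPoly, genBinom, Finset.sum_range_succ, Finset.prod_range_succ, Nat.factorial]
  ring

lemma jac3 (α z : ℝ) : (jacPoly 3 α (-1/2)).eval z =
    ((2*α+7)*(2*α+9)*(2*α+11)*z^3 - 15*(2*α+7)*(2*α+9)*z^2 + 45*(2*α+7)*z - 15)/48 := by
  simp [jacPoly, genBinom, Finset.sum_range_succ, Finset.prod_range_succ, Nat.factorial]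
  ring

lemma key_ineq (α z : ℝ) (hα : 1 ≤ α) (hz : 0 ≤ z) (hz1 : z * (2 * α + 5) ≤ 1)
    (n : ℕ) (hn : 1 ≤ n) :
    (jacPoly 1 α (-1/2)).eval z * genBinom (n + α) n ≤
      (jacPoly n α (-1/2)).eval z * (1 + α) := by
  have hz2 : z ≤ 1 := by nlinarith
  rcases Nat.lt_or_ge n 4 with h4 | h4
  · interval_cases n
    · apply le_of_eq; simp [genBinom]
    · rw [jac1, jac2]
      have e : genBinom ((2 : ℕ) + α) 2 = (α + 2) * (α + 1) / 2 := by
        simp [genBinom, Finset.prod_range_succ, Nat.factorial]; ring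
      rw [e]
      have : 0 ≤ (1 + α) * ((1 - z) * (1 - z * (2 * α + 5)) * (2 * α + 7)) := by
        apply mul_nonneg (by linarith) (mul_nonneg (mul_nonneg _ _) _) <;> linarith
      nlinarith
    · rw [jac1, jac3]
      have e : genBinom ((3 : ℕ) + α) 3 = (α + 3) * (α + 2) * (α + 1) / 6 := by
        simp [genBinom, Finset.prod_range_succ, Nat.factorial]; ring
      rw [e]
      obtain ⟨d, rfl⟩ : ∃ d, α = (d - 3) / 2 := ⟨2 * α + 3, by ring⟩
      have hd : 5 ≤ d := by linarith
      have hz3 : 0 ≤ 1 - (d + 2) * z := by linarith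
      have hQ : 0 ≤ (d - 2) - (d - 7) * (d + 4) * z - (d + 4) * (d + 8) * z ^ 2 := by
        have : 0 ≤ ((d - 2) - (d - 7) * (d + 4) * z - (d + 4) * (d + 8) * z ^ 2) * (d + 2) := by
          have e : ((d - 2) - (d - 7) * (d + 4) * z - (d + 4) * (d + 8) * z ^ 2) * (d + 2)
            = (d - 2) * (d + 2) * (1 - (d + 2) * z) + z * (2 * d ^ 2 + 18 * d + 16)
              + (d + 4) * (d + 8) * (z * (1 - (d + 2) * z)) := by ring
          rw [e]
          have : 0 ≤ d - 2 := by linarith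
          positivity
        exact nonneg_of_mul_nonneg_left this (by linarith)
      have : 0 ≤ (d - 1) * ((d + 6) * (1 - z) *
          ((d - 2) - (d - 7) * (d + 4) * z - (d + 4) * (d + 8) * z ^ 2)) := by
        apply mul_nonneg (by linarith) (mul_nonneg (mul_nonneg _ _) hQ) <;> linarith
      linarith
  · have hE := energy n hn α z hα hz hz1
    rw [jacPoly_eval_zero] at hE
    have hR := ratio_bound α hα n h4
    have hB := genBinom_pos α (by linarith) n
    have hA := genBinom_pos (-1/2) (by norm_num) n
    rw [jac1]
    set A := genBinom (n + (-1/2)) n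
    set B := genBinom (n + α) n
    set p := (jacPoly n α (-1/2)).eval z
    set K := 3 * (2 * α + 5) / (4 * (2 * α + 4)) with hK
    have hKpos : 0 < K := by rw [hK]; apply div_pos <;> linarith
    have hsq : (p * K ^ 2) ^ 2 ≤ A ^ 2 := by
      have e : ((-1 : ℝ) ^ n * A) ^ 2 = A ^ 2 := by
        rw [mul_pow, ← pow_mul, mul_comm n 2, pow_mul]; simp
      rw [e] at hE
      calc (p * K ^ 2) ^ 2 = p ^ 2 * K ^ 4 := by ring
        _ ≤ _ := hE
    have habs := abs_le_of_sq_le_sq hsq hA.le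
    -- p K^2 ≥ -A
    have hlow : -A ≤ p * K ^ 2 := (abs_le.1 habs).1
    -- A ≤ K^2 * (1/((2α+5)(1+α))) * B
    have hfin : A * ((2 * α + 5) * (1 + α)) ≤ K ^ 2 * B := by
      obtain ⟨D, hD⟩ : ∃ D, D = (2*α+2)*(2*α+4)*(2*α+6)*(2*α+8) := ⟨_, rfl⟩
      have hDpos : 0 < D := by rw [hD]; positivity
      rw [← hD] at hR
      have h1 : 105 * ((2 * α + 5) * (1 + α)) ≤ K ^ 2 * D := by
        have e : K ^ 2 * D = 9 * (2*α+5)^2 * (2 * (1 + α)) * (2*α+6) * (2*α+8) / (16 * (2*α+4)) := by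
          rw [hK, hD]; field_simp; ring
        rw [e, le_div_iff₀ (by linarith)]
        have h2 : 105 * 16 * (2*α+4) ≤ 18 * (2*α+5) * (2*α+6) * (2*α+8) := by
          obtain ⟨e, hee⟩ : ∃ e, e = α - 1 := ⟨_, rfl⟩
          have he' : α = 1 + e := by linarith
          have he : 0 ≤ e := by linarith
          have : 0 ≤ e ^ 2 := by positivity
          have : 0 ≤ e ^ 3 := by positivity
          rw [he']
          nlinarith
        have h3 := mul_le_mul_of_nonneg_right h2
          (show 0 ≤ (2 * α + 5) * (1 + α) by positivity)
        linarith
      refine le_of_mul_le_mul_right ?_ hDpos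
      calc A * ((2 * α + 5) * (1 + α)) * D = (A * D) * ((2 * α + 5) * (1 + α)) := by ring
        _ ≤ (105 * B) * ((2 * α + 5) * (1 + α)) :=
          mul_le_mul_of_nonneg_right hR (by positivity)
        _ = (105 * ((2 * α + 5) * (1 + α))) * B := by ring
        _ ≤ (K ^ 2 * D) * B := mul_le_mul_of_nonneg_right h1 hB.le
        _ = K ^ 2 * B * D := by ring
    have hK2 : 0 < K ^ 2 := by positivity
    have hp : -B ≤ p * ((2 * α + 5) * (1 + α)) := by
      have : K ^ 2 * (-B) ≤ K ^ 2 * (p * ((2 * α + 5) * (1 + α))) := by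
        have := mul_le_mul_of_nonneg_right hlow
          (show 0 ≤ (2 * α + 5) * (1 + α) by positivity)
        linarith
      exact le_of_mul_le_mul_left this hK2
    have hP1 : ((2*α+3)*z - 1)/2 * (2 * α + 5) ≤ -1 := by nlinarith
    have hpos5 : 0 < 2 * α + 5 := by linarith
    refine le_of_mul_le_mul_right ?_ hpos5
    have := mul_le_mul_of_nonneg_right hP1 hB.le
    linarith

/-- Optimality of the degree-one polynomial in the Delsarte linear programming bound for
the real sphere (`β = -1/2`): for `α ≥ 1` and `-1 < s ≤ -(2α+3)/(2α+5)`, any feasible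
polynomial `f(t) = Σ_{i=0}^k f_i P_i^{(α,-1/2)}(t)` with `f₀ > 0`, `f_i ≥ 0`, and
`f(t) ≤ 0` on `[-1, s]` satisfies `f(1)/f₀ ≥ 1 - 1/P̃₁^{(α,-1/2)}(s)`. -/
theorem lp_bound_optimal_beta_half (α s : ℝ) (hα : 1 ≤ α)
    (hs0 : -1 < s) (hs1 : s ≤ -(2 * α + 3) / (2 * α + 5))
    (k : ℕ) (f : ℕ → ℝ) (hf0 : 0 < f 0)
    (hf : ∀ i, 1 ≤ i → i ≤ k → 0 ≤ f i)
    (hneg : ∀ t, -1 ≤ t → t ≤ s →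
      (∑ i ∈ Finset.range (k + 1), f i * jacobiP i α (-1/2) t) ≤ 0) :
    (∑ i ∈ Finset.range (k + 1), f i * jacobiP i α (-1/2) 1) / f 0 ≥
      1 - 1 / jacobiPt 1 α (-1/2) s := by
  have hd : 0 < 2 * α + 5 := by linarith
  set z := (s + 1) / 2 with hz
  have hz0 : 0 ≤ z := by rw [hz]; linarith
  have hz1 : z * (2 * α + 5) ≤ 1 := by
    rw [le_div_iff₀ hd] at hs1
    rw [hz]; linarith
  have h11 : jacobiP 1 α (-1/2) 1 = 1 + α := by
    rw [jacobiP_one]; simp [genBinom]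
  have h1s : jacobiP 1 α (-1/2) s = (jacPoly 1 α (-1/2)).eval z := (jacPoly_eval _ _ _ _).symm
  obtain ⟨q, hq⟩ : ∃ q, q = (jacPoly 1 α (-1/2)).eval z := ⟨_, rfl⟩
  have hqneg : q < 0 := by
    rw [hq, jac1]; nlinarith
  have hterm : ∀ i, 1 ≤ i → q * jacobiP i α (-1/2) 1 ≤ jacobiP i α (-1/2) s * (1 + α) := by
    intro i hi
    rw [jacobiP_one, ← jacPoly_eval i α (-1/2) s, hq]
    exact key_ineq α z hα hz0 hz1 i hi
  have h0 : ∀ x, jacobiP 0 α (-1/2) x = 1 := by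
    intro x; simp [jacobiP, genBinom]
  have hS := hneg s hs0.le le_rfl
  rw [Finset.sum_range_succ', h0] at hS
  rw [Finset.sum_range_succ', h0, jacobiPt, h11, h1s, ← hq, ge_iff_le, le_div_iff₀ hf0]
  have hsum : q * ∑ i ∈ Finset.range k, f (i + 1) * jacobiP (i + 1) α (-1/2) 1 ≤
      (∑ i ∈ Finset.range k, f (i + 1) * jacobiP (i + 1) α (-1/2) s) * (1 + α) := by
    rw [Finset.mul_sum, Finset.sum_mul]
    apply Finset.sum_le_sum
    intro i hi
    have h1 := hf (i + 1) (by omega) (by have := Finset.mem_range.1 hi; omega)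
    have := mul_le_mul_of_nonneg_left (hterm (i + 1) (by omega)) h1
    linarith
  set S1 := ∑ i ∈ Finset.range k, f (i + 1) * jacobiP (i + 1) α (-1/2) 1
  set Ss := ∑ i ∈ Finset.range k, f (i + 1) * jacobiP (i + 1) α (-1/2) s
  have h2 : q * S1 ≤ -(f 0) * (1 + α) := by nlinarith
  have h3 : -(f 0) * (1 + α) / q ≤ S1 := by
    rw [div_le_iff_of_neg hqneg]; linarith
  have h4 : (1 - 1 / (q / (1 + α))) * f 0 = f 0 + -(f 0) * (1 + α) / q := by
    have := hqneg.ne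
    field_simp
    ring
  linarith
end

section
/- (Sonine–Pölya theorem) Let a < b be reals and let k, φ, y : ℝ → ℝ be functions such that k and φ are positive on [a, b], the product k·φ is differentiable and monotone nondecreasing on [a, b], y is differentiable, k·y′ is differentiable, and y satisfies the differential equation (k(x) y′(x))′ + φ(x) y(x) = 0 on [a, b]. Then for all x₁, x₂ ∈ [a, b] with x₁ ≤ x₂ and y′(x₁) = y′(x₂) = 0, one has |y(x₂)| ≤ |y(x₁)|. -/
open Set

/-- **Sonine–Pölya theorem**: let `y` solve `(k y')' + φ y = 0` on `[a, b]`, with `k, φ`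
positive on `[a, b]` and `k·φ` differentiable and monotone nondecreasing on `[a, b]`.
Then the values of `|y|` at critical points of `y` are nonincreasing: if
`x₁ ≤ x₂` in `[a, b]` and `y'(x₁) = y'(x₂) = 0`, then `|y(x₂)| ≤ |y(x₁)|`. -/
theorem sonine_polya (a b : ℝ) (hab : a < b) (k φ y : ℝ → ℝ)
    (hk : ∀ x ∈ Icc a b, 0 < k x)
    (hφ : ∀ x ∈ Icc a b, 0 < φ x)
    (hkφdiff : DifferentiableOn ℝ (fun x => k x * φ x) (Icc a b))
    (hkφmono : MonotoneOn (fun x => k x * φ x) (Icc a b))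
    (hy : Differentiable ℝ y)
    (hky' : Differentiable ℝ (fun x => k x * deriv y x))
    (hode : ∀ x ∈ Icc a b, deriv (fun t => k t * deriv y t) x + φ x * y x = 0)
    (x₁ x₂ : ℝ) (hx₁ : x₁ ∈ Icc a b) (hx₂ : x₂ ∈ Icc a b) (h12 : x₁ ≤ x₂)
    (hc₁ : deriv y x₁ = 0) (hc₂ : deriv y x₂ = 0) :
    |y x₂| ≤ |y x₁| := by
  have hQ : ∀ x ∈ Icc a b, 0 < k x * φ x := fun x hx => mul_pos (hk x hx) (hφ x hx)
  have hanti : AntitoneOn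
      (fun x => y x ^ 2 + (k x * deriv y x) ^ 2 / (k x * φ x)) (Icc a b) := by
    have hder : ∀ x ∈ interior (Icc a b), ∃ q : ℝ, 0 ≤ q ∧ HasDerivAt
        (fun x => y x ^ 2 + (k x * deriv y x) ^ 2 / (k x * φ x))
        (-((k x * deriv y x) / (k x * φ x)) ^ 2 * q) x := by
      intro x hx
      have hxI : x ∈ Icc a b := interior_subset hx
      have hnhds : Icc a b ∈ nhds x := mem_interior_iff_mem_nhds.mp hx
      have hqd := (hkφdiff.differentiableAt hnhds).hasDerivAt
      have hq0 : 0 ≤ deriv (fun x => k x * φ x) x := by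
        rw [← derivWithin_of_mem_nhds hnhds]
        exact hkφmono.derivWithin_nonneg
      refine ⟨_, hq0, ?_⟩
      have hP : HasDerivAt (fun x => k x * deriv y x) (-(φ x * y x)) x := by
        have h := (hky' x).hasDerivAt
        rwa [eq_neg_of_add_eq_zero_left (hode x hxI)] at h
      have h := ((hy x).hasDerivAt.pow 2).add ((hP.pow 2).div hqd (hQ x hxI).ne')
      refine HasDerivAt.congr_deriv h ?_
      have hk0 := (hk x hxI).ne'
      have hφ0 := (hφ x hxI).ne'
      simp only [Pi.pow_apply]
      generalize deriv (fun x => k x * φ x) x = q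
      field_simp
      push_cast
      ring
    refine antitoneOn_of_deriv_nonpos (convex_Icc a b) ?_ ?_ ?_
    · exact (hy.continuous.pow 2).continuousOn.add
        ((hky'.continuous.pow 2).continuousOn.div hkφdiff.continuousOn
          (fun x hx => (hQ x hx).ne'))
    · intro x hx
      obtain ⟨q, _, h⟩ := hder x hx
      exact h.differentiableAt.differentiableWithinAt
    · intro x hx
      obtain ⟨q, hq, h⟩ := hder x hx
      rw [h.deriv]
      have := mul_nonneg (sq_nonneg ((k x * deriv y x) / (k x * φ x))) hq
      linarith
  have h := hanti hx₁ hx₂ h12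
  simp only [hc₁, hc₂] at h
  apply sq_le_sq.mp
  simpa using h
end

section
/- Let α ≥ 2 be real and let s satisfy −1 < s ≤ −(α+1)/(α+3). Let k ∈ ℕ and let f₀, f₁, …, f_k be reals with f₀ > 0 and f_i ≥ 0 for i = 1, …, k, and suppose the polynomial f(t) = Σ_{i=0}^k f_i · P_i^{(α,0)}(t) satisfies f(t) ≤ 0 for all t ∈ [−1, s]. Then f(1)/f₀ ≥ 1 − 1/P̃₁^{(α,0)}(s). -/
open Finset

lemma genBinom_nat (n k : ℕ) (hk : k ≤ n) : genBinom (n : ℝ) k = n.choose k := by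
  induction k with
  | zero => simp [genBinom]
  | succ k ih =>
    have h1 := genBinom_succ (n : ℝ) k
    rw [ih (by omega)] at h1
    have h2 := Nat.choose_succ_right_eq n k
    have h3 : ((n.choose (k + 1) : ℕ) : ℝ) * (k + 1) = n.choose k * (n - k) := by
      rw [← Nat.cast_sub (by omega : k ≤ n)]
      exact_mod_cast h2
    have h4 : (k : ℝ) + 1 ≠ 0 := by positivity
    exact mul_right_cancel₀ h4 (h1.trans h3.symm)

lemma genBinom_diag_succ (α : ℝ) (n : ℕ) :
    genBinom ((n + 1 : ℕ) + α) (n + 1) = genBinom (n + α) n * ((n + 1 + α) / (n + 1)) := by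
  have h : (Nat.factorial n : ℝ) ≠ 0 := by positivity
  have h2 : (n : ℝ) + 1 ≠ 0 := by positivity
  unfold genBinom
  rw [Finset.prod_range_succ', Nat.factorial_succ]
  have : ∀ i ∈ Finset.range n, (((n + 1 : ℕ) : ℝ) + α - ((i + 1 : ℕ) : ℝ)) = n + α - i := by
    intro i _
    push_cast
    ring
  rw [Finset.prod_congr rfl this]
  push_cast
  field_simp
  ring

/-- coefficients -/
noncomputable def jA (n : ℕ) (α : ℝ) (j : ℕ) : ℝ := genBinom (n + α) j * n.choose j

lemma jA_succ (n : ℕ) (α : ℝ) (j : ℕ) (hj : j ≤ n) :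
    jA n α (j + 1) * (j + 1) ^ 2 = jA n α j * ((n - j : ℕ) * ((n - j : ℕ) + α)) := by
  have h1 := genBinom_succ (n + α) j
  have h2 := Nat.choose_succ_right_eq n j
  have h3 : ((n.choose (j + 1) : ℕ) : ℝ) * (j + 1) = n.choose j * (n - j : ℕ) := by
    exact_mod_cast h2
  unfold jA
  calc _ = (genBinom (n + α) (j + 1) * (j + 1)) * ((n.choose (j + 1) : ℝ) * (j + 1)) := by ring
    _ = _ := by
      rw [h1, h3, Nat.cast_sub hj]
      ring

noncomputable def jQ (n : ℕ) (α t : ℝ) : ℝ :=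
  ∑ j ∈ Finset.range (n + 1), jA n α j * (t ^ j * (t - 1) ^ (n - j))

lemma jacobiP_eq (n : ℕ) (α x : ℝ) : jacobiP n α 0 x = jQ n α ((x + 1) / 2) := by
  unfold jacobiP jQ
  rw [← Finset.sum_range_reflect]
  apply Finset.sum_congr rfl
  intro j hj
  have hj' : j ≤ n := by
    have := Finset.mem_range.1 hj
    omega
  have e1 : n + 1 - 1 - j = n - j := by omega
  have e2 : n - (n - j) = j := by omega
  rw [e1, e2, add_zero, genBinom_nat n _ (Nat.sub_le _ _), Nat.choose_symm hj', jA]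
  have : (x - 1) / 2 = (x + 1) / 2 - 1 := by ring
  rw [this]
  ring

lemma jQ_one (n : ℕ) (α : ℝ) : jQ n α 1 = genBinom (n + α) n := by
  unfold jQ
  rw [Finset.sum_range_succ, Finset.sum_eq_zero]
  · simp [jA]
  · intro j hj
    have : n - j ≠ 0 := by
      have := Finset.mem_range.1 hj
      omega
    simp [this]

lemma jQ_zero_sq (n : ℕ) (α : ℝ) : jQ n α 0 ^ 2 = 1 := by
  unfold jQ
  rw [Finset.sum_range_succ', Finset.sum_eq_zero]
  · simp [jA, genBinom_zero, ← pow_mul, mul_comm n 2]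
  · intro j hj
    simp

noncomputable def d1 (j m : ℕ) (t : ℝ) : ℝ :=
  j * t ^ (j - 1) * (t - 1) ^ m + m * t ^ j * (t - 1) ^ (m - 1)

noncomputable def d2 (j m : ℕ) (t : ℝ) : ℝ :=
  j * d1 (j - 1) m t + m * d1 j (m - 1) t

lemma hasDerivAt_d0 (j m : ℕ) (t : ℝ) :
    HasDerivAt (fun t : ℝ => t ^ j * (t - 1) ^ m) (d1 j m t) t := by
  have h1 := hasDerivAt_pow j t
  have h2 := ((hasDerivAt_id t).sub_const 1).pow m
  have h3 := h1.mul h2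
  refine h3.congr_deriv ?_
  simp [d1]
  ring

lemma hasDerivAt_d1 (j m : ℕ) (t : ℝ) :
    HasDerivAt (fun t : ℝ => d1 j m t) (d2 j m t) t := by
  have h1 := (hasDerivAt_d0 (j - 1) m t).const_mul (j : ℝ)
  have h2 := (hasDerivAt_d0 j (m - 1) t).const_mul (m : ℝ)
  have h3 := h1.add h2
  have e : (fun t : ℝ => d1 j m t) = (fun y : ℝ => (j : ℝ) * (y ^ (j - 1) * (y - 1) ^ m))
      + fun y : ℝ => (m : ℝ) * (y ^ j * (y - 1) ^ (m - 1)) := by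
    funext t
    simp [d1]
    ring
  rw [e]
  exact h3

lemma ode_term (j m : ℕ) (α t : ℝ) :
    t * (1 - t) * d2 j m t + (1 - (α + 2) * t) * d1 j m t
      + (j + m) * (j + m + α + 1) * (t ^ j * (t - 1) ^ m)
      = (j : ℝ) ^ 2 * (t ^ (j - 1) * (t - 1) ^ m)
        - (m : ℝ) * (m + α) * (t ^ j * (t - 1) ^ (m - 1)) := by
  unfold d2 d1
  rcases j with _ | _ | j <;> rcases m with _ | _ | m <;> simp <;> ring

noncomputable def jQ1 (n : ℕ) (α t : ℝ) : ℝ :=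
  ∑ j ∈ Finset.range (n + 1), jA n α j * d1 j (n - j) t
noncomputable def jQ2 (n : ℕ) (α t : ℝ) : ℝ :=
  ∑ j ∈ Finset.range (n + 1), jA n α j * d2 j (n - j) t

lemma hasDerivAt_jQ (n : ℕ) (α t : ℝ) : HasDerivAt (jQ n α) (jQ1 n α t) t := by
  unfold jQ1
  have : jQ n α = fun t => ∑ j ∈ Finset.range (n + 1), jA n α j * (t ^ j * (t - 1) ^ (n - j)) := rfl
  rw [this]
  exact HasDerivAt.fun_sum fun j _ => (hasDerivAt_d0 j (n - j) t).const_mul _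

lemma hasDerivAt_jQ1 (n : ℕ) (α t : ℝ) : HasDerivAt (jQ1 n α) (jQ2 n α t) t := by
  unfold jQ2
  have : jQ1 n α = fun t => ∑ j ∈ Finset.range (n + 1), jA n α j * d1 j (n - j) t := rfl
  rw [this]
  exact HasDerivAt.fun_sum fun j _ => (hasDerivAt_d1 j (n - j) t).const_mul _

lemma jQ_ode (n : ℕ) (α t : ℝ) :
    t * (1 - t) * jQ2 n α t + (1 - (α + 2) * t) * jQ1 n α t
      + n * (n + α + 1) * jQ n α t = 0 := by
  unfold jQ2 jQ1 jQ
  rw [Finset.mul_sum, Finset.mul_sum, Finset.mul_sum, ← Finset.sum_add_distrib,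
    ← Finset.sum_add_distrib]
  set B : ℕ → ℝ := fun j => jA n α j * ((j : ℝ) ^ 2 * (t ^ (j - 1) * (t - 1) ^ (n - j))) with hB
  have : ∀ j ∈ Finset.range (n + 1),
      t * (1 - t) * (jA n α j * d2 j (n - j) t)
      + (1 - (α + 2) * t) * (jA n α j * d1 j (n - j) t)
      + n * (n + α + 1) * (jA n α j * (t ^ j * (t - 1) ^ (n - j))) = B j - B (j + 1) := by
    intro j hj
    have hj' : j ≤ n := by
      have := Finset.mem_range.1 hj
      omega
    have h1 := ode_term j (n - j) α t
    have h2 := jA_succ n α j hj'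
    have e : (n : ℝ) = j + (n - j : ℕ) := by
      rw [Nat.cast_sub hj']
      ring
    have e2 : n - (j + 1) = n - j - 1 := by omega
    simp only [hB, e2, Nat.add_sub_cancel]
    push_cast
    rw [← mul_assoc (jA n α (j + 1)), h2]
    have e3 : (n : ℝ) * (n + α + 1) = (j + (n - j : ℕ)) * (j + (n - j : ℕ) + α + 1) := by
      rw [← e]
    rw [e3]
    linear_combination (jA n α j) * h1
  rw [Finset.sum_congr rfl this, Finset.sum_range_sub']
  simp [hB, jA]

/-- Sonine-type bound -/
lemma jQ_bound (n : ℕ) (hn : 1 ≤ n) (α t : ℝ) (hα : 2 ≤ α) (ht0 : 0 ≤ t)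
    (ht1 : t * (α + 3) ≤ 1) : jQ n α t ^ 2 ≤ (α + 2) / 3 := by
  have hn' : (1 : ℝ) ≤ n := by exact_mod_cast hn
  set l : ℝ := n * (n + α + 1) with hl
  have hlpos : 0 < l := by positivity
  set c : ℝ := (α - 1) * (α + 3) / (α + 2) with hc
  have hc0 : 0 ≤ c := by
    have : 0 ≤ α - 1 := by linarith
    positivity
  have hcm : c * (α + 2) = (α - 1) * (α + 3) := by
    rw [hc]
    field_simp
  set G : ℝ → ℝ := fun t => (1 - c * t) * (jQ n α t ^ 2 + t * (1 - t) * jQ1 n α t ^ 2 / l) with hG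
  have hder : ∀ t, HasDerivAt G
      (-c * (jQ n α t ^ 2 + t * (1 - t) * jQ1 n α t ^ 2 / l)
        + (1 - c * t) * ((2 * (α + 1) * t - 1) * jQ1 n α t ^ 2 / l)) t := by
    intro t
    have h0 := hasDerivAt_jQ n α t
    have h1 := hasDerivAt_jQ1 n α t
    have hid := hasDerivAt_id t
    have hA := ((hid.const_mul c).const_sub 1)
    have hB := (h0.pow 2).add (((hid.mul (hid.const_sub 1)).mul (h1.pow 2)).div_const l)
    have hC := hA.mul hB
    refine hC.congr_deriv ?_
    have hode := jQ_ode n α t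
    rw [← hl] at hode
    simp
    field_simp
    left
    linear_combination (2 * jQ1 n α t) * hode
  have hanti : AntitoneOn G (Set.Icc 0 (1 / (α + 3))) := by
    apply antitoneOn_of_deriv_nonpos (convex_Icc _ _)
    · exact fun x _ => (hder x).continuousAt.continuousWithinAt
    · exact fun x _ => (hder x).differentiableAt.differentiableWithinAt
    · intro x hx
      rw [interior_Icc] at hx
      obtain ⟨hx0, hx1⟩ := hx
      rw [(hder x).deriv]
      have hx1' : x * (α + 3) ≤ 1 := by
        rw [lt_div_iff₀ (by linarith)] at hx1
        exact hx1.le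
      have hxs : x ≤ 1 := by nlinarith
      have hcx : c * x ≤ 1 := by
        have : c * x * (α + 2) ≤ 1 * (α + 2) := by
          nlinarith
        exact le_of_mul_le_mul_right this (by linarith)
      -- key: (2(α+1)x-1) ≤ c x (1-x)
      have key : 2 * (α + 1) * x - 1 ≤ c * (x * (1 - x)) := by
        have : (2 * (α + 1) * x - 1) * (α + 2) ≤ c * (x * (1 - x)) * (α + 2) := by
          have e : c * (x * (1 - x)) * (α + 2) = (α - 1) * (α + 3) * (x * (1 - x)) := by
            rw [← hcm]
            ring
          rw [e]
          have : 0 ≤ (1 - x * (α + 3)) * ((α + 2) + (α - 1) * x) := by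
            apply mul_nonneg (by linarith)
            have : 0 ≤ α - 1 := by linarith
            positivity
          nlinarith
        exact le_of_mul_le_mul_right this (by linarith)
      have hq : 0 ≤ jQ1 n α x ^ 2 / l := by positivity
      have h1 : (2 * (α + 1) * x - 1) * (jQ1 n α x ^ 2 / l)
          ≤ c * (x * (1 - x)) * (jQ1 n α x ^ 2 / l) := mul_le_mul_of_nonneg_right key hq
      have h2 : 0 ≤ c * (x * (1 - x)) * (jQ1 n α x ^ 2 / l) := by
        have : 0 ≤ 1 - x := by linarith
        positivity
      have h3 : (1 - c * x) * ((2 * (α + 1) * x - 1) * (jQ1 n α x ^ 2 / l))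
          ≤ (1 - c * x) * (c * (x * (1 - x)) * (jQ1 n α x ^ 2 / l)) :=
        mul_le_mul_of_nonneg_left h1 (by linarith)
      have h4 : 0 ≤ (c * x) * (c * (x * (1 - x)) * (jQ1 n α x ^ 2 / l)) :=
        mul_nonneg (by positivity) h2
      have h5 : 0 ≤ c * jQ n α x ^ 2 := by positivity
      have e1 : (2 * (α + 1) * x - 1) * jQ1 n α x ^ 2 / l
        = (2 * (α + 1) * x - 1) * (jQ1 n α x ^ 2 / l) := by ring
      have e2 : x * (1 - x) * jQ1 n α x ^ 2 / l = x * (1 - x) * (jQ1 n α x ^ 2 / l) := by ring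
      rw [e1, e2]
      linarith
  have ht1' : t ≤ 1 / (α + 3) := by
    rw [le_div_iff₀ (by linarith)]
    exact ht1
  have hle := hanti ⟨le_refl 0, by positivity⟩ ⟨ht0, ht1'⟩ ht0
  have hG0 : G 0 = 1 := by simp [hG, jQ_zero_sq]
  rw [hG0] at hle
  have hts : 0 ≤ 1 - t := by nlinarith
  have hmid : jQ n α t ^ 2 ≤ jQ n α t ^ 2 + t * (1 - t) * jQ1 n α t ^ 2 / l := by
    have : 0 ≤ t * (1 - t) * jQ1 n α t ^ 2 / l := by positivity
    linarith
  have hct : 3 ≤ (1 - c * t) * (α + 2) := by nlinarith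
  have hct' : 3 / (α + 2) ≤ 1 - c * t := by
    rw [div_le_iff₀ (by linarith)]
    exact hct
  have h1 : (3 / (α + 2)) * jQ n α t ^ 2 ≤ 1 := by
    refine le_trans ?_ hle
    exact mul_le_mul hct' hmid (by positivity) (le_trans (by positivity) hct')
  rw [le_div_iff₀ (by norm_num)]
  rw [div_mul_eq_mul_div, div_le_one (by linarith)] at h1
  linarith

lemma genBinom_lower (α : ℝ) (hα : 2 ≤ α) (n : ℕ) (hn : 5 ≤ n) :
    (α + 1) * (α + 2) * (α + 3) * (α + 4) * (α + 5) / 120 ≤ genBinom (n + α) n := by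
  induction n, hn using Nat.le_induction with
  | base =>
    apply le_of_eq
    simp [genBinom, Finset.prod_range_succ, Nat.factorial]
    ring
  | succ n hn ih =>
    rw [genBinom_diag_succ]
    have h0 : 0 ≤ genBinom (n + α) n := le_trans (by positivity) ih
    have h1 : 1 ≤ ((n : ℝ) + 1 + α) / (n + 1) := by
      rw [le_div_iff₀ (by positivity)]
      linarith
    nlinarith

lemma jQ_cmp_large (n : ℕ) (hn : 5 ≤ n) (α t : ℝ) (hα : 2 ≤ α) (ht0 : 0 ≤ t)
    (ht1 : t * (α + 3) ≤ 1) :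
    0 ≤ (α + 1) * jQ n α t + (1 - (α + 2) * t) * genBinom (n + α) n := by
  have hb := jQ_bound n (by omega) α t hα ht0 ht1
  have hg := genBinom_lower α hα n hn
  have h1 : 1 ≤ (1 - (α + 2) * t) * (α + 3) := by nlinarith
  have h2 : 1 / (α + 3) ≤ 1 - (α + 2) * t := by
    rw [div_le_iff₀ (by linarith)]
    exact h1
  set R : ℝ := (α + 2) * (α + 4) * (α + 5) / 120 with hR
  have hRpos : 0 ≤ R := by positivity
  have h3 : (α + 1) * R ≤ (1 - (α + 2) * t) * genBinom (n + α) n := by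
    have : (α + 1) * R
        = 1 / (α + 3) * ((α + 1) * (α + 2) * (α + 3) * (α + 4) * (α + 5) / 120) := by
      rw [hR]
      field_simp
    rw [this]
    exact mul_le_mul h2 hg (by positivity) (le_trans (by positivity) h2)
  have h4 : (α + 2) / 3 ≤ R ^ 2 := by
    obtain ⟨a, rfl⟩ : ∃ a, α = a + 2 := ⟨α - 2, by ring⟩
    have ha : 0 ≤ a := by linarith
    rw [hR, ← sub_nonneg]
    ring_nf
    positivity
  have h5 : |jQ n α t| ≤ R := abs_le_of_sq_le_sq (hb.trans h4) hRpos
  have h6 := (abs_le.1 h5).1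
  nlinarith

lemma jQ_cmp_one (α t : ℝ) :
    0 = (α + 1) * jQ 1 α t + (1 - (α + 2) * t) * genBinom ((1 : ℕ) + α) 1 := by
  simp [jQ, jA, genBinom, Finset.sum_range_succ, Finset.prod_range_succ]
  ring

lemma jQ_cmp_two (α t : ℝ) (hα : 2 ≤ α) (ht0 : 0 ≤ t)
    (ht1 : t * (α + 3) ≤ 1) :
    0 ≤ (α + 1) * jQ 2 α t + (1 - (α + 2) * t) * genBinom ((2 : ℕ) + α) 2 := by
  have hts : 0 ≤ 1 - t := by nlinarith
  have : (α + 1) * jQ 2 α t + (1 - (α + 2) * t) * genBinom ((2 : ℕ) + α) 2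
      = (α + 1) / 2 * (α + 4) * ((1 - t) * (1 - t * (α + 3))) := by
    simp [jQ, jA, genBinom, Finset.sum_range_succ, Finset.prod_range_succ, Nat.factorial, Nat.choose]
    ring
  rw [this]
  have : 0 ≤ 1 - t * (α + 3) := by linarith
  positivity

lemma jQ_cmp_three (α t : ℝ) (hα : 2 ≤ α) (ht0 : 0 ≤ t)
    (ht1 : t * (α + 3) ≤ 1) :
    0 ≤ (α + 1) * jQ 3 α t + (1 - (α + 2) * t) * genBinom ((3 : ℕ) + α) 3 := by
  have hts : 0 ≤ 1 - t := by nlinarith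
  obtain ⟨a, rfl⟩ : ∃ a, α = a + 2 := ⟨α - 2, by ring⟩
  have ha : 0 ≤ a := by linarith
  obtain ⟨x, hx⟩ : ∃ x, x = t * (a + 2 + 3) := ⟨_, rfl⟩
  obtain ⟨y, hy⟩ : ∃ y, y = 1 - x := ⟨_, rfl⟩
  have hx0 : 0 ≤ x := by rw [hx]; positivity
  have hy0 : 0 ≤ y := by linarith
  have key : (a + 5) ^ 2 * ((a + 2 + 1) * jQ 3 (a + 2) t
      + (1 - (a + 2 + 2) * t) * genBinom ((3 : ℕ) + (a + 2)) 3)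
      = (a + 3) / 6 * ((1 - t) * ((350*a^0 + 365*a^1 + 129*a^2 + 19*a^3 + 1*a^4)*x^0*y^2 + (910*a^0 + 627*a^1 + 169*a^2 + 21*a^3 + 1*a^4)*x^1*y^1 + (224*a^0 + 116*a^1 + 19*a^2 + 1*a^3)*x^2*y^0)) := by
    subst hy hx
    simp [jQ, jA, genBinom, Finset.sum_range_succ, Finset.prod_range_succ, Nat.factorial, Nat.choose]
    ring
  have h : 0 ≤ (a + 5) ^ 2 * ((a + 2 + 1) * jQ 3 (a + 2) t
      + (1 - (a + 2 + 2) * t) * genBinom ((3 : ℕ) + (a + 2)) 3) := by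
    rw [key]
    positivity
  exact nonneg_of_mul_nonneg_right h (by positivity)

lemma jQ_cmp_four (α t : ℝ) (hα : 2 ≤ α) (ht0 : 0 ≤ t)
    (ht1 : t * (α + 3) ≤ 1) :
    0 ≤ (α + 1) * jQ 4 α t + (1 - (α + 2) * t) * genBinom ((4 : ℕ) + α) 4 := by
  have hts : 0 ≤ 1 - t := by nlinarith
  obtain ⟨a, rfl⟩ : ∃ a, α = a + 2 := ⟨α - 2, by ring⟩
  have ha : 0 ≤ a := by linarith
  obtain ⟨x, hx⟩ : ∃ x, x = t * (a + 2 + 3) := ⟨_, rfl⟩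
  obtain ⟨y, hy⟩ : ∃ y, y = 1 - x := ⟨_, rfl⟩
  have hx0 : 0 ≤ x := by rw [hx]; positivity
  have hy0 : 0 ≤ y := by linarith
  have key : (a + 5) ^ 3 * ((a + 2 + 1) * jQ 4 (a + 2) t
      + (1 - (a + 2 + 2) * t) * genBinom ((4 : ℕ) + (a + 2)) 4)
      = (a + 3) / 24 * ((1 - t) * ((18000*a^0 + 20050*a^1 + 9585*a^2 + 2504*a^3 + 374*a^4 + 30*a^5 + 1*a^6)*x^0*y^3 + (28800*a^0 + 39120*a^1 + 20392*a^2 + 5434*a^3 + 798*a^4 + 62*a^5 + 2*a^6)*x^1*y^2 + (18720*a^0 + 24324*a^1 + 12436*a^2 + 3219*a^3 + 451*a^4 + 33*a^5 + 1*a^6)*x^2*y^1 + (2880*a^0 + 2840*a^1 + 1198*a^2 + 255*a^3 + 26*a^4 + 1*a^5)*x^3*y^0)) := by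
    subst hy hx
    simp [jQ, jA, genBinom, Finset.sum_range_succ, Finset.prod_range_succ, Nat.factorial, Nat.choose]
    ring
  have h : 0 ≤ (a + 5) ^ 3 * ((a + 2 + 1) * jQ 4 (a + 2) t
      + (1 - (a + 2 + 2) * t) * genBinom ((4 : ℕ) + (a + 2)) 4) := by
    rw [key]
    positivity
  exact nonneg_of_mul_nonneg_right h (by positivity)

lemma jQ_cmp (n : ℕ) (hn : 1 ≤ n) (α t : ℝ) (hα : 2 ≤ α) (ht0 : 0 ≤ t)
    (ht1 : t * (α + 3) ≤ 1) :
    0 ≤ (α + 1) * jQ n α t + (1 - (α + 2) * t) * genBinom (n + α) n := by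
  rcases Nat.lt_or_ge n 5 with h | h
  · interval_cases n
    · exact (jQ_cmp_one α t).le
    · exact jQ_cmp_two α t hα ht0 ht1
    · exact jQ_cmp_three α t hα ht0 ht1
    · exact jQ_cmp_four α t hα ht0 ht1
  · exact jQ_cmp_large n h α t hα ht0 ht1

/-- Optimality of the degree-one polynomial in the linear programming bound for the
complex sphere (`β = 0`): for `α ≥ 2` and `-1 < s ≤ -(α+1)/(α+3)`, any feasible
polynomial `f(t) = Σ_{i=0}^k f_i P_i^{(α,0)}(t)` with `f₀ > 0`, `f_i ≥ 0`, and
`f(t) ≤ 0` on `[-1, s]` satisfies `f(1)/f₀ ≥ 1 - 1/P̃₁^{(α,0)}(s)`. -/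
theorem lp_bound_optimal_beta_zero (α s : ℝ) (hα : 2 ≤ α)
    (hs0 : -1 < s) (hs1 : s ≤ -(α + 1) / (α + 3))
    (k : ℕ) (f : ℕ → ℝ) (hf0 : 0 < f 0)
    (hf : ∀ i, 1 ≤ i → i ≤ k → 0 ≤ f i)
    (hneg : ∀ t, -1 ≤ t → t ≤ s →
      (∑ i ∈ Finset.range (k + 1), f i * jacobiP i α 0 t) ≤ 0) :
    (∑ i ∈ Finset.range (k + 1), f i * jacobiP i α 0 1) / f 0 ≥
      1 - 1 / jacobiPt 1 α 0 s := by
  obtain ⟨t, ht⟩ : ∃ t, t = (s + 1) / 2 := ⟨_, rfl⟩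
  have ht0 : 0 ≤ t := by linarith
  have ht1 : t * (α + 3) ≤ 1 := by
    rw [le_div_iff₀ (by linarith)] at hs1
    rw [ht]
    linarith
  have hN := hneg s hs0.le le_rfl
  simp only [jacobiPt, jacobiP_eq] at hN ⊢
  rw [← ht] at hN ⊢
  have hone : ((1 : ℝ) + 1) / 2 = 1 := by norm_num
  rw [hone]
  simp only [jQ_one]
  have hg1 : genBinom ((1 : ℕ) + α) 1 = α + 1 := by
    simp [genBinom]
    ring
  have hw : 0 < 1 - (α + 2) * t := by nlinarith
  have hq1 : jQ 1 α t = -(1 - (α + 2) * t) := by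
    have := jQ_cmp_one α t
    rw [hg1] at this
    have h2 : (α + 1) ≠ 0 := by positivity
    apply mul_left_cancel₀ h2
    linarith
  rw [hq1, hg1]
  rw [Finset.sum_range_succ'] at hN ⊢
  have h00 : jQ 0 α t = 1 := by simp [jQ, jA, genBinom]
  have h01 : genBinom ((0 : ℕ) + α) 0 = 1 := genBinom_zero _
  rw [h00] at hN
  rw [h01]
  have hsum : 0 ≤ ∑ i ∈ Finset.range k, f (i + 1) *
      ((α + 1) * jQ (i + 1) α t
        + (1 - (α + 2) * t) * genBinom (((i + 1 : ℕ) : ℝ) + α) (i + 1)) := by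
    apply Finset.sum_nonneg
    intro i hi
    have := Finset.mem_range.1 hi
    exact mul_nonneg (hf _ (by omega) (by omega)) (jQ_cmp _ (by omega) α t hα ht0 ht1)
  have hsplit : ∑ i ∈ Finset.range k, f (i + 1) *
      ((α + 1) * jQ (i + 1) α t
        + (1 - (α + 2) * t) * genBinom (((i + 1 : ℕ) : ℝ) + α) (i + 1))
      = (α + 1) * ∑ i ∈ Finset.range k, f (i + 1) * jQ (i + 1) α t
        + (1 - (α + 2) * t) * ∑ i ∈ Finset.range k,
          f (i + 1) * genBinom (((i + 1 : ℕ) : ℝ) + α) (i + 1) := by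
    rw [Finset.mul_sum, Finset.mul_sum, ← Finset.sum_add_distrib]
    apply Finset.sum_congr rfl
    intro i _
    ring
  rw [hsplit] at hsum
  set S := ∑ i ∈ Finset.range k, f (i + 1) * genBinom (((i + 1 : ℕ) : ℝ) + α) (i + 1)
  set T := ∑ i ∈ Finset.range k, f (i + 1) * jQ (i + 1) α t
  have hfin : (α + 1) * f 0 ≤ (1 - (α + 2) * t) * S := by nlinarith
  have e : 1 - 1 / (-(1 - (α + 2) * t) / (α + 1)) = 1 + (α + 1) / (1 - (α + 2) * t) := by
    rw [one_div_div, div_neg]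
    ring
  rw [e, ge_iff_le, le_div_iff₀ hf0]
  have : (α + 1) / (1 - (α + 2) * t) * f 0 ≤ S := by
    rw [div_mul_eq_mul_div, div_le_iff₀ hw]
    linarith
  linarith
end
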